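/- arXiv:1507.08540 — 2 statements merged into one kernel-verified Lean document; each statement's English description precedes it below -/
import Mathlib

section
/- (Krasnoselskii fixed point theorem) Let B be a nonempty closed convex subset of a Banach space X, and let A, B' : B → X be maps such that (i) A u + B' v ∈ B for all u, v ∈ B, (ii) A is a contraction (Lipschitz with constant k < 1), and (iii) B' is continuous and B'(B) is relatively compact. Then there exists z ∈ B with z = A z + B' z. -/
open NNReal

/-!
Since `A` is a contraction, `u ↦ u - A u` has a Lipschitz inverse `S` on the closure of `B' '' B`,
and a fixed point of `S ∘ B'`, which maps `B` into a compact subset of `B`, is a solution.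

Such a fixed point exists by Schauder's theorem. To find a point of `B` moved by at most `ε`, take
an `ε`-net `y` of the compact set and cover the simplex of weights `t` by the closed sets `F i` on
which the image of `∑ i, t i • y i` is `ε`-close to `y i`. By the Knaster-Kuratowski-Mazurkiewicz
covering lemma, some `t` lies in `F i` for every `i` with `t i ≠ 0`, so that `∑ i, t i • y i` is a
convex combination of points `ε`-close to its image.

The covering lemma follows by compactness from Scarf's combinatorial lemma for a fine net of the
simplex. The latter is a parity argument in the style of Sperner's lemma, in which the orderings of
the net by each coordinate replace the triangulation.
-/

section Scarf

open Finset

theorem card_filter_image_erase_eq_image {α β : Type*} [DecidableEq α] [DecidableEq β]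
    {s : Finset α} {f : α → β} (h : #(s.image f) + 1 = #s) :
    #{x ∈ s | (s.erase x).image f = s.image f} = 2 := by
  obtain ⟨a, ha, b, hb, hab, hfab⟩ :=
    exists_ne_map_eq_of_card_lt_of_maps_to (t := s.image f) (by lia)
      fun _ => mem_image_of_mem f
  have injOn_erase {x} (hx : x ∈ s) (himage : (s.erase x).image f = s.image f) :
      Set.InjOn f (s.erase x : Finset α) :=
    card_image_iff.1 <| by rw [himage, card_erase_of_mem hx]; lia
  have image_erase {x y} (hy : y ∈ s) (hyx : y ≠ x) (hf : f y = f x) :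
      (s.erase x).image f = s.image f := by
    refine (image_subset_image (erase_subset x s)).antisymm fun z hz => ?_
    obtain ⟨w, hw, rfl⟩ := mem_image.1 hz
    by_cases hwx : w = x
    · exact mem_image.2 ⟨y, mem_erase.2 ⟨hyx, hy⟩, by rw [hf, hwx]⟩
    · exact mem_image_of_mem f (mem_erase.2 ⟨hwx, hw⟩)
  suffices {x ∈ s | (s.erase x).image f = s.image f} = {a, b} by rw [this, card_pair hab]
  ext x
  simp only [mem_filter, mem_insert, mem_singleton]
  constructor
  · rintro ⟨hx, himage⟩
    by_contra! hxab
    exact hab <| injOn_erase hx himage (mem_erase.2 ⟨hxab.1.symm, ha⟩)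
      (mem_erase.2 ⟨hxab.2.symm, hb⟩) hfab
  · rintro (rfl | rfl)
    · exact ⟨ha, image_erase hb hab.symm hfab.symm⟩
    · exact ⟨hb, image_erase ha hab hfab⟩

theorem even_card_filter_image_erase_eq {α β : Type*} [DecidableEq α] [DecidableEq β] [Fintype β]
    {s : Finset α} {f : α → β} (hcard : #s = Fintype.card β) (himage : s.image f ≠ univ) (b : β) :
    Even #{x ∈ s | (s.erase x).image f = univ.erase b} := by
  by_cases h : s.image f = univ.erase b
  · rw [← h, card_filter_image_erase_eq_image]
    · exact even_two
    · rw [h, hcard, card_erase_add_one (mem_univ b), card_univ]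
  · rw [filter_eq_empty_iff.2, card_empty]
    · exact Even.zero
    · intro x _ hx
      have hsub : univ.erase b ⊆ s.image f := hx ▸ image_subset_image (erase_subset x s)
      by_cases hb : b ∈ s.image f
      · exact himage <| univ_subset_iff.1 <|
          insert_erase (mem_univ b) ▸ insert_subset hb hsub
      · exact h <| (subset_erase.2 ⟨subset_univ _, hb⟩).antisymm hsub

section Dominating

variable {ι V L : Type*} [LinearOrder L] {r : ι → V → L} {σ τ : Finset V} {j : ι} {t x : V}

/-- Scarf's dominating sets, for a family `r` of coordinates: no `t` exceeds every point of `σ` in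
every coordinate by having `r i t > min (r i '' σ)` for all `i`. They play the role of the simplices
of a triangulation with vertex set `V`. -/
def IsDominating (r : ι → V → L) (σ : Finset V) : Prop :=
  ∀ t, ∃ i, ∀ x ∈ σ, r i t ≤ r i x

/-- The coordinate `j` is not needed to see all points of `τ` as minimisers of a coordinate. The
redundant coordinates of a facet `τ` index the simplices containing it. -/
def IsRedundant (r : ι → V → L) (τ : Finset V) (j : ι) : Prop :=
  ∀ y ∈ τ, ∃ i ≠ j, ∀ x ∈ τ, r i y ≤ r i x

/-- The points exceeding the minimum of `τ` in every coordinate other than `j`. -/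
def upperRegion (r : ι → V → L) (τ : Finset V) (j : ι) : Set V :=
  {t | ∀ i ≠ j, ∃ x ∈ τ, r i x < r i t}

theorem IsDominating.mono (h : IsDominating r σ) (hτ : τ ⊆ σ) : IsDominating r τ := fun t =>
  (h t).imp fun _ hi x hx => hi x (hτ hx)

theorem IsDominating.le_of_mem_upperRegion (h : IsDominating r τ) (ht : t ∈ upperRegion r τ j) :
    ∀ x ∈ τ, r j t ≤ r j x := by
  obtain ⟨i, hi⟩ := h t
  obtain rfl : i = j := by
    by_contra hij
    obtain ⟨x, hx, hlt⟩ := ht i hij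
    exact hlt.not_ge (hi x hx)
  exact hi

theorem IsDominating.eq_of_mem_upperRegion {j' : ι} (h : IsDominating r τ)
    (hj : t ∈ upperRegion r τ j) (hj' : t ∈ upperRegion r τ j') : j = j' := by
  by_contra hjj'
  obtain ⟨x, hx, hlt⟩ := hj' j hjj'
  exact hlt.not_ge (h.le_of_mem_upperRegion hj x hx)

theorem IsRedundant.notMem_of_mem_upperRegion (hj : IsRedundant r τ j)
    (hx : x ∈ upperRegion r τ j) : x ∉ τ := fun hxτ => by
  obtain ⟨i, hij, hmin⟩ := hj x hxτ
  obtain ⟨y, hy, hlt⟩ := hx i hij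
  exact hlt.not_ge (hmin y hy)

open scoped Classical in
theorem IsDominating.card_filter_isRedundant [Fintype ι] (hr : ∀ i, Function.Injective (r i))
    (h : IsDominating r τ) (hne : τ.Nonempty) (hcard : #τ + 1 = Fintype.card ι) :
    #{j | IsRedundant r τ j} = 2 := by
  choose m hmτ hm using fun i => exists_min_image τ (r i) hne
  have hm_eq {i y} (hy : y ∈ τ) (hmin : ∀ x ∈ τ, r i y ≤ r i x) : m i = y :=
    hr i ((hm i y hy).antisymm (hmin _ (hmτ i)))
  have himage : univ.image m = τ := by
    refine (image_subset_iff.2 fun i _ => hmτ i).antisymm fun y hy => ?_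
    obtain ⟨i, hi⟩ := h y
    exact mem_image.2 ⟨i, mem_univ i, hm_eq hy hi⟩
  have hiff (j : ι) : IsRedundant r τ j ↔ (univ.erase j).image m = univ.image m := by
    rw [himage]
    constructor
    · refine fun hj => (image_subset_iff.2 fun i _ => hmτ i).antisymm fun y hy => ?_
      obtain ⟨i, hij, hi⟩ := hj y hy
      exact mem_image.2 ⟨i, mem_erase.2 ⟨hij, mem_univ i⟩, hm_eq hy hi⟩
    · intro hj y hy
      obtain ⟨i, hi, rfl⟩ := mem_image.1 (hj ▸ hy)
      exact ⟨i, ne_of_mem_erase hi, hm i⟩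
  simp only [hiff]
  exact card_filter_image_erase_eq_image (by rw [himage, hcard, card_univ])

section Insert

variable [DecidableEq V]

theorem IsDominating.insert_of_isMaxOn (h : IsDominating r τ) (hx : x ∈ upperRegion r τ j)
    (hmax : IsMaxOn (r j) (upperRegion r τ j) x) : IsDominating r (insert x τ) := fun t => by
  simp only [forall_mem_insert]
  by_cases ht : t ∈ upperRegion r τ j
  · exact ⟨j, hmax ht, h.le_of_mem_upperRegion ht⟩
  · simp only [upperRegion, Set.mem_ofPred_eq] at ht
    push Not at ht
    obtain ⟨i, hij, hmin⟩ := ht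
    obtain ⟨y, hy, hlt⟩ := hx i hij
    exact ⟨i, (hmin y hy).trans hlt.le, hmin⟩

theorem IsDominating.exists_isRedundant_isMaxOn [Fintype ι] (hr : ∀ i, Function.Injective (r i))
    (h : IsDominating r (insert x τ)) (hx : x ∉ τ) (hcard : #τ + 1 = Fintype.card ι) :
    ∃ j, IsRedundant r τ j ∧ x ∈ upperRegion r τ j ∧ IsMaxOn (r j) (upperRegion r τ j) x := by
  classical
  choose g hg using h
  have hginj : Set.InjOn g (insert x τ : Finset V) := fun y hy z hz hyz =>
    hr (g y) ((hg y z hz).antisymm (hyz ▸ hg z y hy))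
  have hgsurj : (insert x τ).image g = univ := by
    rw [← card_eq_iff_eq_univ, card_image_of_injOn hginj, card_insert_of_notMem hx, hcard]
  have hmem {y} (hy : y ∈ τ) : y ∈ insert x τ := mem_insert_of_mem hy
  have hne {y} (hy : y ∈ τ) : g y ≠ g x := fun heq =>
    hx (hginj (hmem hy) (mem_insert_self x τ) heq ▸ hy)
  have hxmem : x ∈ upperRegion r τ (g x) := by
    intro i hi
    obtain ⟨y, hy, rfl⟩ := mem_image.1 (hgsurj ▸ mem_univ i)
    have hyx : y ≠ x := fun heq => hi (heq ▸ rfl)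
    exact ⟨y, (mem_insert.1 hy).resolve_left hyx,
      (hg y x (mem_insert_self x τ)).lt_of_ne ((hr _).ne hyx)⟩
  refine ⟨g x, fun y hy => ⟨g y, hne hy, fun z hz => hg y z (hmem hz)⟩, hxmem, fun t ht => ?_⟩
  have hgt : g t = g x := by
    by_contra hgt
    obtain ⟨y, hy, hlt⟩ := ht (g t) hgt
    exact hlt.not_ge (hg t y (hmem hy))
  exact hgt ▸ hg t x (mem_insert_self x τ)

open scoped Classical in
theorem even_card_filter_isDominating_insert [Fintype ι] [Fintype V]
    (hr : ∀ i, Function.Injective (r i)) (hne : τ.Nonempty) (hcard : #τ + 1 = Fintype.card ι)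
    (hupper : ∀ j, (upperRegion r τ j).Nonempty) :
    Even #{x | x ∉ τ ∧ IsDominating r (insert x τ)} := by
  by_cases h : IsDominating r τ
  · choose g hg hgmax using fun j =>
      Set.exists_max_image (upperRegion r τ j) (r j) (Set.toFinite _) (hupper j)
    suffices #{j | IsRedundant r τ j} = #{x | x ∉ τ ∧ IsDominating r (insert x τ)} by
      rw [← this, h.card_filter_isRedundant hr hne hcard]
      exact even_two
    refine card_bij (fun j _ => g j) (fun j hj => ?_)
      (fun j _ j' _ heq => h.eq_of_mem_upperRegion (hg j) (heq ▸ hg j')) (fun x hx => ?_)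
    · simp only [mem_filter_univ] at hj ⊢
      exact ⟨hj.notMem_of_mem_upperRegion (hg j), h.insert_of_isMaxOn (hg j) (hgmax j)⟩
    · simp only [mem_filter_univ] at hx ⊢
      obtain ⟨j, hj, hxj, hmax⟩ := hx.2.exists_isRedundant_isMaxOn hr hx.1 hcard
      exact ⟨j, hj, hr j ((hmax (hg j)).antisymm (hgmax j x hxj))⟩
  · rw [filter_eq_empty_iff.2 fun x _ hx => h (hx.2.mono (subset_insert x τ)), card_empty]
    exact Even.zero

end Insert

end Dominating

section Slack

variable {ι V L : Type*} [LinearOrder L] {r : ι → V → L} {s : ι → V} {c : V → ι}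

/-- Slack points: `s i` is the lowest point in coordinate `i` and lies above all non-slack points
in the other coordinates. They play the role of the vertices of the large simplex which the
simplices of a triangulation fill. -/
structure IsSlack (r : ι → V → L) (s : ι → V) : Prop where
  le : ∀ i t, r i (s i) ≤ r i t
  lt : ∀ ⦃i j⦄, i ≠ j → ∀ t ∉ Set.range s, r i t < r i (s j)

theorem IsSlack.mem_upperRegion {τ : Finset V} {x : V} (hs : IsSlack r s) (hx : x ∈ τ)
    (hxs : x ∉ Set.range s) (j : ι) : s j ∈ upperRegion r τ j := fun _ hij =>
  ⟨x, hx, hs.lt hij x hxs⟩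

variable [Fintype ι] [DecidableEq ι]

theorem IsSlack.isDominating_insert_image_iff [DecidableEq V] {i₀ : ι} {x : V} (hs : IsSlack r s)
    (hr : ∀ i, Function.Injective (r i)) (hV : ∃ t, t ∉ Set.range s)
    (hx : x ∉ (univ.erase i₀).image s) :
    IsDominating r (insert x ((univ.erase i₀).image s)) ↔
      ∀ t ∉ (univ.erase i₀).image s, r i₀ t ≤ r i₀ x := by
  have mem_image_iff {t} : t ∈ (univ.erase i₀).image s ↔ ∃ i ≠ i₀, s i = t := by simp
  have eq_slack {i t} (hle : r i t ≤ r i (s i)) : t = s i := hr i (hle.antisymm (hs.le i t))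
  simp only [IsDominating, forall_mem_insert, mem_image_iff] at hx ⊢
  push Not at hx
  constructor
  · intro hdom t ht
    obtain ⟨i, hix, hi⟩ := hdom t
    obtain rfl : i = i₀ := by
      by_contra hii₀
      exact ht ⟨i, hii₀, (eq_slack (hi _ ⟨i, hii₀, rfl⟩)).symm⟩
    exact hix
  · intro hmax t
    by_cases ht : ∃ i ≠ i₀, s i = t
    · obtain ⟨i, -, rfl⟩ := ht
      exact ⟨i, hs.le i x, fun y _ => hs.le i y⟩
    · have hxs : x ∉ Set.range s := by
        obtain ⟨t₀, ht₀⟩ := hV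
        rintro ⟨i, rfl⟩
        obtain rfl : i = i₀ := by_contra fun hi => hx i hi rfl
        exact ht₀ ⟨i, (eq_slack (hmax t₀ fun ⟨k, _, hk⟩ => ht₀ ⟨k, hk⟩)).symm⟩
      refine ⟨i₀, hmax t ht, ?_⟩
      rintro _ ⟨i, hi, rfl⟩
      exact (hmax t ht).trans (hs.lt hi.symm x hxs).le

open scoped Classical in
theorem IsSlack.card_filter_isDominating_insert [Fintype V] [DecidableEq V]
    (hs : IsSlack r s) (hr : ∀ i, Function.Injective (r i)) (hV : ∃ t, t ∉ Set.range s) (i₀ : ι) :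
    #{x | x ∉ (univ.erase i₀).image s ∧ IsDominating r (insert x ((univ.erase i₀).image s))} =
      1 := by
  rw [filter_congr fun x _ => and_congr_right fun hx => hs.isDominating_insert_image_iff hr hV hx]
  have hne : ((univ.erase i₀).image s)ᶜ.Nonempty := by
    obtain ⟨t, ht⟩ := hV
    exact ⟨t, mem_compl.2 fun h => ht <| (mem_image.1 h).imp fun _ hi => hi.2⟩
  obtain ⟨m, hm, hmax⟩ := exists_max_image _ (r i₀) hne
  simp only [mem_compl] at hm hmax
  refine card_eq_one.2 ⟨m, eq_singleton_iff_unique_mem.2 ⟨by simp_all, fun x hx => ?_⟩⟩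
  obtain ⟨hxτ, hx⟩ := (mem_filter_univ x).1 hx
  exact hr i₀ ((hmax x hxτ).antisymm (hx m hm))

open scoped Classical in
theorem sum_card_filter_isDominating_insert [Fintype V] [DecidableEq V] (r : ι → V → L)
    (c : V → ι) (i₀ : ι) :
    ∑ τ with #τ + 1 = Fintype.card ι ∧ τ.image c = univ.erase i₀,
      #{x | x ∉ τ ∧ IsDominating r (insert x τ)} =
    ∑ σ with #σ = Fintype.card ι ∧ IsDominating r σ,
      #{x ∈ σ | (σ.erase x).image c = univ.erase i₀} := by
  rw [← card_sigma, ← card_sigma]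
  refine card_nbij' (fun p => ⟨insert p.2 p.1, p.2⟩) (fun p => ⟨p.1.erase p.2, p.2⟩) ?_ ?_ ?_ ?_
  · rintro ⟨τ, x⟩ h
    simp_all
  · rintro ⟨σ, x⟩ h
    simp only [mem_coe, mem_sigma, mem_filter, mem_univ, true_and] at h ⊢
    obtain ⟨⟨hcard, hdom⟩, hx, himage⟩ := h
    rw [card_erase_add_one hx, insert_erase hx]
    exact ⟨⟨hcard, himage⟩, notMem_erase x σ, hdom⟩
  · rintro ⟨τ, x⟩ h
    simp_all
  · rintro ⟨σ, x⟩ h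
    simp_all

theorem IsSlack.odd_sum_card_filter_isDominating_insert [Fintype V] [DecidableEq V]
    (hs : IsSlack r s) (hr : ∀ i, Function.Injective (r i)) (hV : ∃ t, t ∉ Set.range s)
    (hc : Function.LeftInverse c s) (i₀ : ι) :
    open scoped Classical in
    Odd (∑ τ with #τ + 1 = Fintype.card ι ∧ τ.image c = univ.erase i₀,
      #{x | x ∉ τ ∧ IsDominating r (insert x τ)}) := by
  classical
  set τ₀ := (univ.erase i₀).image s with hτ₀
  have hmem : τ₀ ∈ ({τ | #τ + 1 = Fintype.card ι ∧ τ.image c = univ.erase i₀} :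
      Finset (Finset V)) := by
    have hcs : c ∘ s = id := hc.comp_eq_id
    simp only [mem_filter_univ, hτ₀, image_image, hcs, image_id, and_true]
    rw [card_image_of_injective _ hc.injective, card_erase_add_one (mem_univ i₀), card_univ]
  -- `τ₀` is the only such facet made of slack points, that is, on the boundary.
  rw [← add_sum_erase _ _ hmem, hs.card_filter_isDominating_insert hr hV i₀]
  refine odd_one.add_even (even_sum _ fun τ hτ => ?_)
  simp only [mem_erase, mem_filter_univ] at hτ
  obtain ⟨hne, hcard, himage⟩ := hτ
  obtain ⟨x, hx, hxs⟩ : ∃ x ∈ τ, x ∉ Set.range s := by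
    by_contra! hsub
    refine hne ?_
    have hsc : Set.EqOn (s ∘ c) id τ := fun x hx => by
      obtain ⟨i, rfl⟩ := hsub x hx
      exact congrArg s (hc i)
    rw [hτ₀, ← himage, image_image, image_congr hsc, image_id]
  exact even_card_filter_isDominating_insert hr ⟨x, hx⟩ hcard fun j =>
    ⟨s j, hs.mem_upperRegion hx hxs j⟩

theorem IsSlack.exists_isDominating_image_eq_univ (hs : IsSlack r s)
    (hr : ∀ i, Function.Injective (r i)) (hV : ∃ t, t ∉ Set.range s)
    [Finite V] (hc : Function.LeftInverse c s) : ∃ σ, IsDominating r σ ∧ σ.image c = univ := by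
  classical
  have := Fintype.ofFinite V
  by_contra! hcon
  have ⟨t, _⟩ := hV
  refine Nat.not_odd_iff_even.2 ?_ (hs.odd_sum_card_filter_isDominating_insert hr hV hc (c t))
  rw [sum_card_filter_isDominating_insert]
  refine even_sum _ fun σ hσ => ?_
  obtain ⟨hcard, hdom⟩ := (mem_filter_univ σ).1 hσ
  exact even_card_filter_image_erase_eq hcard (hcon σ hdom) (c t)

end Slack

/-- The coordinates `h`, extended to `T ⊕ ι` by making `Sum.inr` a family of slack points, with ties
broken by the enumeration `e`. -/
def slackCoord {ι T L κ : Type*} [DecidableEq ι] (h : ι → T → L) (e : T ⊕ ι → κ) (i : ι)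
    (v : T ⊕ ι) : WithBot (WithTop L) ×ₗ κ :=
  toLex (v.elim (fun t => ↑(h i t : WithTop L)) (fun j => if i = j then ⊥ else ↑(⊤ : WithTop L)),
    e v)

section SlackCoord

variable {ι T L κ : Type*} [DecidableEq ι] {e : T ⊕ ι → κ}

theorem slackCoord_injective (h : ι → T → L) (he : Function.Injective e) (i : ι) :
    Function.Injective (slackCoord h e i) := fun _ _ hvw =>
  he (congrArg Prod.snd (toLex.injective hvw))

variable [LinearOrder L] [LinearOrder κ]

theorem isSlack_slackCoord (h : ι → T → L) (e : T ⊕ ι → κ) :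
    IsSlack (slackCoord h e) Sum.inr where
  le i v := by
    rcases v with t | j
    · simp [slackCoord, Prod.Lex.toLex_le_toLex]
    · by_cases hij : i = j
      · simp [hij]
      · simp [slackCoord, Prod.Lex.toLex_le_toLex, hij]
  lt i j hij v hv := by
    rcases v with t | k
    · have hlt : ((h i t : WithTop L) : WithBot (WithTop L)) < (⊤ : WithTop L) :=
        WithBot.coe_lt_coe.2 (WithTop.coe_lt_top _)
      simpa [slackCoord, Prod.Lex.toLex_lt_toLex, hij] using hlt
    · exact absurd ⟨k, rfl⟩ hv

theorem le_of_slackCoord_le {h : ι → T → L} {i : ι} {t x : T}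
    (hle : slackCoord h e i (.inl t) ≤ slackCoord h e i (.inl x)) : h i t ≤ h i x := by
  rcases Prod.Lex.toLex_le_toLex.1 hle with hlt | heq
  · exact (by simpa using hlt : h i t < h i x).le
  · exact (by simpa using heq.1 : h i t = h i x).le

theorem slackCoord_inr_self_lt (h : ι → T → L) (e : T ⊕ ι → κ) (i : ι) (t : T) :
    slackCoord h e i (.inr i) < slackCoord h e i (.inl t) := by
  simp [slackCoord, Prod.Lex.toLex_lt_toLex]

end SlackCoord

/-- Scarf's lemma. Slack points are needed to realise every colour, but the one of colour `i` lies
below `T` in coordinate `i`, so `i` witnesses domination of a point of `T` only if `i ∈ c '' σ`.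
-/
theorem exists_forall_exists_mem_image_forall_le {ι T L : Type*} [Finite ι] [Finite T]
    [Nonempty T] [LinearOrder L] (h : ι → T → L) (c : T → ι) :
    ∃ σ : Set T, ∀ t, ∃ i ∈ c '' σ, ∀ x ∈ σ, h i t ≤ h i x := by
  classical
  have := Fintype.ofFinite ι
  have := Fintype.ofFinite T
  have e := Fintype.equivFin (T ⊕ ι)
  obtain ⟨ρ, hdom, himage⟩ := (isSlack_slackCoord h e).exists_isDominating_image_eq_univ
    (slackCoord_injective h e.injective) ⟨.inl (Classical.arbitrary T), by simp⟩
    (c := Sum.elim c id) fun _ => rfl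
  refine ⟨{t | .inl t ∈ ρ}, fun t => ?_⟩
  obtain ⟨i, hi⟩ := hdom (.inl t)
  refine ⟨i, ?_, fun x hx => le_of_slackCoord_le (hi _ hx)⟩
  obtain ⟨x | j, hx, rfl⟩ := mem_image.1 (himage ▸ mem_univ i)
  · exact ⟨x, hx, rfl⟩
  · exact absurd (hi _ hx) (slackCoord_inr_self_lt h e j t).not_ge

end Scarf

section FixedPoint

open Finset Filter Topology

theorem exists_tendsto_subseq_of_dist_le_one_div {X : Type*} [PseudoMetricSpace X] {K : Set X}
    (hK : IsCompact K) {p : ℕ → X} (hp : ∀ n, p n ∈ K) :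
    ∃ a ∈ K, ∃ φ : ℕ → ℕ, Tendsto (p ∘ φ) atTop (𝓝 a) ∧
      ∀ x : ℕ → X, (∀ n, dist (x n) (p n) ≤ 1 / ((n : ℝ) + 1)) → Tendsto (x ∘ φ) atTop (𝓝 a) := by
  obtain ⟨a, ha, φ, hφ, hlim⟩ := hK.tendsto_subseq hp
  refine ⟨a, ha, φ, hlim, fun x hx => hlim.congr_dist ?_⟩
  exact squeeze_zero (fun _ => dist_nonneg) (fun n => dist_comm (x (φ n)) _ ▸ hx (φ n))
    (tendsto_one_div_add_atTop_nhds_zero_nat.comp hφ.tendsto_atTop)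

theorem exists_forall_mem_of_forall_exists_dist_le {X ι : Type*} [PseudoMetricSpace X]
    {K : Set X} (hK : IsCompact K) {F : ι → Set X} (hF : ∀ i, IsClosed (F i))
    (h : ∀ ε > 0, ∃ p ∈ K, ∀ i, ∃ x ∈ F i, dist x p ≤ ε) : ∃ p ∈ K, ∀ i, p ∈ F i := by
  choose p hpK hp using fun n : ℕ => h (1 / ((n : ℝ) + 1)) (by positivity)
  obtain ⟨a, ha, φ, -, hlim⟩ := exists_tendsto_subseq_of_dist_le_one_div hK hpK
  refine ⟨a, ha, fun i => ?_⟩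
  choose x hxF hx using fun n => hp n i
  exact (hF i).mem_of_tendsto (hlim x hx) (.of_forall fun n => hxF (φ n))

section StdSimplex

variable {ι : Type*} [Fintype ι] {δ : ℝ} {μ : ι → ℝ} {σ : Set (ι → ℝ)}

theorem one_sub_sum_le_of_forall_exists_apply_le (hδ : 0 < δ) (hμ : ∀ i, 0 ≤ μ i) [Nonempty ι]
    (hdense : ∀ q ∈ stdSimplex ℝ ι, ∃ t ∈ σ, dist q t < δ) (hσ : ∀ t ∈ σ, ∃ i, t i ≤ μ i) :
    1 - ∑ i, μ i ≤ Fintype.card ι * δ := by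
  -- Otherwise `μ + δ` has sum less than `1`, so scaling it up to the simplex gives a point that
  -- exceeds `μ` by at least `δ` in every coordinate, and so cannot be approximated by `σ`.
  by_contra! hlt
  set S := ∑ i, (μ i + δ) with hS
  have hSpos : 0 < S := sum_pos (fun i _ => add_pos_of_nonneg_of_pos (hμ i) hδ) univ_nonempty
  have hS1 : S < 1 := by
    rw [hS, sum_add_distrib, sum_const, card_univ, nsmul_eq_mul]
    linarith
  have hle (i : ι) : μ i + δ ≤ (μ i + δ) / S :=
    le_div_self (add_nonneg (hμ i) hδ.le) hSpos hS1.le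
  obtain ⟨t, ht, hqt⟩ := hdense (fun i => (μ i + δ) / S)
    ⟨fun i => (add_nonneg (hμ i) hδ.le).trans (hle i), by rw [← sum_div, ← hS, div_self hSpos.ne']⟩
  obtain ⟨i, hi⟩ := hσ t ht
  have hdist := (dist_le_pi_dist _ t i).trans_lt hqt
  rw [Real.dist_eq, abs_lt] at hdist
  linarith [hle i]

theorem exists_set_forall_apply_mem_Icc [Nonempty ι] (hδ : 0 < δ) {T : Set (ι → ℝ)}
    (hT : T.Finite) (hTsub : T ⊆ stdSimplex ℝ ι)
    (hdense : ∀ q ∈ stdSimplex ℝ ι, ∃ t ∈ T, dist q t < δ) (c : T → ι) :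
    ∃ σ : Set T, σ.Nonempty ∧ ∃ μ : ι → ℝ, (∀ i ∉ c '' σ, μ i = 0) ∧
      ∀ t ∈ σ, ∀ i, (t : ι → ℝ) i ∈ Set.Icc (μ i) (μ i + Fintype.card ι * δ) := by
  classical
  have := hT.to_subtype
  have : Nonempty T := by
    obtain ⟨t, ht, -⟩ := hdense _ (single_mem_stdSimplex ℝ (Classical.arbitrary ι))
    exact ⟨⟨t, ht⟩⟩
  obtain ⟨σ, hσ⟩ := exists_forall_exists_mem_image_forall_le (fun i (t : T) => (t : ι → ℝ) i) c
  have hσne : σ.Nonempty := by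
    obtain ⟨i, hi, -⟩ := hσ (Classical.arbitrary T)
    exact Set.image_nonempty.1 ⟨i, hi⟩
  choose y hyσ hy using fun i =>
    Set.exists_min_image σ (fun t : T => (t : ι → ℝ) i) σ.toFinite hσne
  let μ : ι → ℝ := fun i => if i ∈ c '' σ then (y i : ι → ℝ) i else 0
  have hμ_nonneg (i : ι) : 0 ≤ μ i := by
    dsimp only [μ]
    split_ifs
    exacts [(hTsub (y i).2).1 i, le_rfl]
  have hμ_le {t : T} (ht : t ∈ σ) (i : ι) : μ i ≤ (t : ι → ℝ) i := by
    dsimp only [μ]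
    split_ifs
    exacts [hy i t ht, (hTsub t.2).1 i]
  have hsum : 1 - ∑ i, μ i ≤ Fintype.card ι * δ :=
    one_sub_sum_le_of_forall_exists_apply_le hδ hμ_nonneg hdense fun t ht => by
      obtain ⟨i, hi, hmin⟩ := hσ ⟨t, ht⟩
      exact ⟨i, by simpa only [μ, if_pos hi] using hmin _ (hyσ i)⟩
  refine ⟨σ, hσne, μ, fun i hi => if_neg hi, fun t ht i => ⟨hμ_le ht i, ?_⟩⟩
  have hle_sum := single_le_sum (f := fun j => (t : ι → ℝ) j - μ j)
    (fun j _ => sub_nonneg.2 (hμ_le ht j)) (mem_univ i)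
  rw [sum_sub_distrib, (hTsub t.2).2] at hle_sum
  linarith

theorem exists_forall_exists_eq_zero_or_mem_dist_le [Nonempty ι] {F : ι → Set (ι → ℝ)}
    (hF : stdSimplex ℝ ι ⊆ ⋃ i, F i) {ε : ℝ} (hε : 0 < ε) :
    ∃ p ∈ stdSimplex ℝ ι, ∀ i, ∃ x, (x i = 0 ∨ x ∈ F i) ∧ dist x p ≤ ε := by
  classical
  have hδ : 0 < ε / Fintype.card ι := by positivity
  obtain ⟨T, hTsub, hT, hcover⟩ := (isCompact_stdSimplex ℝ ι).finite_cover_balls hδ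
  choose c hc using fun t : T => Set.mem_iUnion.1 (hF (hTsub t.2))
  obtain ⟨σ, ⟨p, hp⟩, μ, hμ, hσ⟩ := exists_set_forall_apply_mem_Icc hδ hT hTsub
    (fun q hq => by simpa using hcover hq) c
  rw [mul_div_cancel₀ _ (by positivity)] at hσ
  refine ⟨p, hTsub p.2, fun i => ?_⟩
  by_cases hi : i ∈ c '' σ
  · obtain ⟨x, hx, rfl⟩ := hi
    refine ⟨x, .inr (hc x), (dist_pi_le_iff hε.le).2 fun j => ?_⟩
    exact (Real.dist_le_of_mem_Icc (hσ x hx j) (hσ p hp j)).trans_eq (add_sub_cancel_left _ _)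
  · refine ⟨Function.update p i 0, .inl (Function.update_self i 0 _),
      (dist_pi_le_iff hε.le).2 fun j => ?_⟩
    have hpj := hσ p hp j
    obtain rfl | hji := eq_or_ne j i
    · rw [hμ j hi, zero_add] at hpj
      rw [Function.update_self, dist_zero_left, Real.norm_of_nonneg hpj.1]
      exact hpj.2
    · rw [Function.update_of_ne hji, dist_self]
      exact hε.le

/-- The Knaster-Kuratowski-Mazurkiewicz lemma. The alternative `p i = 0` replaces the usual
requirement that each face be covered by the sets `F i` of its own vertices. -/
theorem exists_mem_stdSimplex_forall_eq_zero_or_mem [Nonempty ι] {F : ι → Set (ι → ℝ)}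
    (hF : ∀ i, IsClosed (F i)) (hcover : stdSimplex ℝ ι ⊆ ⋃ i, F i) :
    ∃ p ∈ stdSimplex ℝ ι, ∀ i, p i = 0 ∨ p ∈ F i :=
  exists_forall_mem_of_forall_exists_dist_le (isCompact_stdSimplex ℝ ι)
    (F := fun i => {x | x i = 0} ∪ F i)
    (fun i => (isClosed_eq (continuous_apply i) continuous_const).union (hF i))
    fun _ hε => exists_forall_exists_eq_zero_or_mem_dist_le hcover hε

end StdSimplex

section Schauder

variable {E : Type*} [SeminormedAddCommGroup E] [NormedSpace ℝ E] {B K : Set E} {T : E → E}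

theorem exists_mem_dist_apply_le (hne : B.Nonempty) (hconv : Convex ℝ B) (hK : TotallyBounded K)
    (hKB : K ⊆ B) (hT : ContinuousOn T B) (hTK : Set.MapsTo T B K) {ε : ℝ} (hε : 0 < ε) :
    ∃ x ∈ B, dist x (T x) ≤ ε := by
  obtain ⟨s, hsK, hs, hcover⟩ := Metric.finite_approx_of_totallyBounded hK ε hε
  have := hs.fintype
  have exists_dist_le {x} (hx : x ∈ B) : ∃ y : s, dist (T x) y ≤ ε := by
    obtain ⟨y, hy, hxy⟩ := Set.mem_iUnion₂.1 (hcover (hTK hx))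
    exact ⟨⟨y, hy⟩, (Metric.mem_ball.1 hxy).le⟩
  have : Nonempty s := by
    obtain ⟨b, hb⟩ := hne
    exact (exists_dist_le hb).nonempty
  let q : (s → ℝ) → E := fun t => ∑ y, t y • (y : E)
  have hq : Set.MapsTo q (stdSimplex ℝ s) B := fun t ht =>
    hconv.sum_mem (fun y _ => ht.1 y) ht.2 fun y _ => hKB (hsK y.2)
  have hTq : ContinuousOn (T ∘ q) (stdSimplex ℝ s) :=
    hT.comp (Continuous.continuousOn (by fun_prop)) hq
  obtain ⟨t, ht, hmem⟩ := exists_mem_stdSimplex_forall_eq_zero_or_mem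
    (F := fun y : s => stdSimplex ℝ s ∩ T ∘ q ⁻¹' Metric.closedBall y ε)
    (fun y => hTq.preimage_isClosed_of_isClosed (isClosed_stdSimplex ℝ s)
      Metric.isClosed_closedBall)
    fun t ht => Set.mem_iUnion.2 <| (exists_dist_le (hq ht)).imp fun _ hy => ⟨ht, hy⟩
  refine ⟨q t, hq ht, ?_⟩
  have hfinsum : ∑ᶠ y, t y • (y : E) ∈ Metric.closedBall (T (q t)) ε :=
    (convex_closedBall _ _).finsum_mem ht.1 (by rw [finsum_eq_sum_of_fintype, ht.2])
      fun y hy => Metric.mem_closedBall_comm.1 ((hmem y).resolve_left hy).2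
  rwa [finsum_eq_sum_of_fintype] at hfinsum

end Schauder

theorem exists_isFixedPt_of_mapsTo_isCompact {E : Type*} [NormedAddCommGroup E] [NormedSpace ℝ E]
    {B K : Set E} {T : E → E} (hne : B.Nonempty) (hconv : Convex ℝ B) (hK : IsCompact K)
    (hKB : K ⊆ B) (hT : ContinuousOn T B) (hTK : Set.MapsTo T B K) :
    ∃ z ∈ B, Function.IsFixedPt T z := by
  choose x hxB hx using fun n : ℕ => exists_mem_dist_apply_le hne hconv hK.totallyBounded hKB hT hTK
    (ε := 1 / ((n : ℝ) + 1)) (by positivity)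
  obtain ⟨z, hz, φ, hTlim, hlim⟩ :=
    exists_tendsto_subseq_of_dist_le_one_div hK fun n => hTK (hxB n)
  have hxlim : Tendsto (x ∘ φ) atTop (𝓝[B] z) :=
    tendsto_nhdsWithin_iff.2 ⟨hlim x hx, .of_forall fun n => hxB (φ n)⟩
  exact ⟨z, hKB hz, tendsto_nhds_unique ((hT z (hKB hz)).tendsto.comp hxlim) hTlim⟩

end FixedPoint

theorem antilipschitzWith_domRestrict_id_sub {X : Type*} [SeminormedAddCommGroup X] {B : Set X}
    {A : X → X} {k : ℝ≥0} (hk : k < 1) (hA : LipschitzOnWith k A B) :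
    AntilipschitzWith (1 - k)⁻¹ (B.domRestrict fun u => u - A u) := by
  have := (AntilipschitzWith.subtype_coe B).add_lipschitzWith hA.to_restrict.neg (by simpa using hk)
  simpa [Set.domRestrict_def, sub_eq_add_neg] using this

theorem surjOn_id_sub_of_lipschitzOnWith {X : Type*} [NormedAddCommGroup X] {B C : Set X}
    {A : X → X} {k : ℝ≥0} (hB : IsComplete B) (hne : B.Nonempty) (hk : k < 1)
    (hA : LipschitzOnWith k A B) (hAC : ∀ u ∈ B, ∀ w ∈ C, A u + w ∈ B) :
    Set.SurjOn (fun u => u - A u) B C := by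
  intro w hw
  have hmaps : Set.MapsTo (fun u => A u + w) B B := fun u hu => hAC u hu w hw
  have hcontr : ContractingWith k (hmaps.restrict (fun u => A u + w) B B) :=
    ⟨hk, fun u v => (edist_add_right _ _ w).trans_le (hA u.2 v.2)⟩
  obtain ⟨x, hx⟩ := hne
  obtain ⟨u, hu, hfix, -⟩ := hcontr.exists_fixedPoint' hB hmaps hx (edist_ne_top _ _)
  exact ⟨u, hu, sub_eq_iff_eq_add'.2 hfix.symm⟩

theorem krasnoselskii_general {X : Type*} [NormedAddCommGroup X] [NormedSpace ℝ X] {B : Set X}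
    (hne : B.Nonempty) (hB : IsComplete B) (hconv : Convex ℝ B) {A B' : X → X} {k : ℝ≥0}
    (hk : k < 1) (hA : LipschitzOnWith k A B) (hsum : ∀ u ∈ B, ∀ v ∈ B, A u + B' v ∈ B)
    (hcont : ContinuousOn B' B) (hcomp : IsCompact (closure (B' '' B))) :
    ∃ z ∈ B, z = A z + B' z := by
  have hsum_closure : ∀ u ∈ B, ∀ w ∈ closure (B' '' B), A u + w ∈ B := by
    intro u hu
    have hclosed : IsClosed {w | A u + w ∈ B} := hB.isClosed.preimage (continuous_const_add (A u))
    exact closure_minimal (Set.image_subset_iff.2 (hsum u hu)) hclosed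
  have hsurj := surjOn_id_sub_of_lipschitzOnWith hB hne hk hA hsum_closure
  set S := Function.invFunOn (fun u => u - A u) B
  have hS : Set.MapsTo S (closure (B' '' B)) B := hsurj.mapsTo_invFunOn
  have hS_inv : Set.RightInvOn S (fun u => u - A u) (closure (B' '' B)) :=
    hsurj.rightInvOn_invFunOn
  have hS_cont : ContinuousOn S (closure (B' '' B)) :=
    continuousOn_iff_continuous_domRestrict.2
      ((antilipschitzWith_domRestrict_id_sub hk hA).to_rightInvOn' hS hS_inv).continuous
  have hB' : Set.MapsTo B' B (closure (B' '' B)) := fun u hu => subset_closure ⟨u, hu, rfl⟩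
  obtain ⟨z, hz, hfix⟩ := exists_isFixedPt_of_mapsTo_isCompact hne hconv
    (hcomp.image_of_continuousOn hS_cont) hS.image_subset (hS_cont.comp hcont hB')
    fun u hu => Set.mem_image_of_mem S (hB' hu)
  refine ⟨z, hz, sub_eq_iff_eq_add'.1 ?_⟩
  calc z - A z = S (B' z) - A (S (B' z)) := by rw [show S (B' z) = z from hfix]
    _ = B' z := hS_inv (hB' hz)

theorem krasnoselskii {X : Type*} [NormedAddCommGroup X] [NormedSpace ℝ X]
    [CompleteSpace X]
    (B : Set X) (hne : B.Nonempty) (hcl : IsClosed B) (hconv : Convex ℝ B)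
    (A B' : X → X) (k : ℝ≥0) (hk : (k : ℝ) < 1)
    (hA : LipschitzOnWith k A B)
    (hsum : ∀ u ∈ B, ∀ v ∈ B, A u + B' v ∈ B)
    (hcont : ContinuousOn B' B)
    (hcomp : IsCompact (closure (B' '' B))) :
    ∃ z ∈ B, z = A z + B' z :=
  krasnoselskii_general hne hcl.isComplete hconv (by exact_mod_cast hk) hA hsum hcont hcomp
end

section
/- Let 0 < α < 1. The function s ↦ E_{α,α}(-s) is nonincreasing on [0, ∞), and in particular E_{α,α}(-s) ≤ 1/Γ(α) for all s ≥ 0. -/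
/-- The two-parameter Mittag-Leffler function `E_{α,α}(z) = Σ_{m≥0} z^m / Γ(αm+α)`. -/
noncomputable def mittagLeffler (α z : ℝ) : ℝ :=
  ∑' m : ℕ, z ^ m / Real.Gamma (α * m + α)

/-!
Multiplying the power series of `E = E_{α,α}` and integrating against the beta weight gives the
resolvent identity
`E x - E y = (x - y) ∫₀¹ s ^ (α - 1) (1 - s) ^ (α - 1) E (x s ^ α) E (y (1 - s) ^ α) ds`,
so `E` is strictly increasing as soon as it is positive. For `y = 0` and `x < 0` the identity is a
Volterra equation `f t = f 0 - ∫₀ᵗ K t u f u du` for `f t = E (x t ^ α)` whose kernel `K t u` is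
nonnegative and, because `α ≤ 1`, decreasing in `t`. At a first zero `b` of `f` this would yield
`f t ≤ ∫ₜᵇ K b u f u du` for all `t ≤ b`, which a backward Gronwall argument excludes.
-/

open Finset.HasAntidiagonal (antidiagonal mem_antidiagonal)
open MeasureTheory Real Set Topology

theorem exists_nonpos_of_le_integral_mul {w g : ℝ → ℝ} {a b : ℝ} (hab : a < b)
    (hw : IntervalIntegrable w volume a b) (hw_nonneg : ∀ u ∈ Ioo a b, 0 ≤ w u)
    (hg : ContinuousOn g (Icc a b))
    (hle : ∀ t ∈ Icc a b, g t ≤ ∫ u in t..b, w u * g u) : ∃ t ∈ Ico a b, g t ≤ 0 := by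
  by_contra! hpos
  have htail : ContinuousOn (fun t => ∫ u in t..b, w u) (Icc a b) := by
    rw [← uIcc_of_le hab.le]
    exact (intervalIntegral.continuousOn_primitive_interval' hw right_mem_uIcc).neg.congr
      fun t _ => intervalIntegral.integral_symm b t
  obtain ⟨c, hc, hcw⟩ : ∃ c ∈ Ico a b, ∀ t ∈ Icc c b, ∫ u in t..b, w u < 1 := by
    have hlt : ∀ᶠ t in 𝓝[Icc a b] b, ∫ u in t..b, w u < 1 :=
      (htail b (right_mem_Icc.2 hab.le)).eventually_lt_const (by simp)
    rw [nhdsWithin_Icc_eq_nhdsLE hab] at hlt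
    obtain ⟨l, hl, hlw⟩ := (mem_nhdsLE_iff_exists_mem_Ico_Ioc_subset hab).1 hlt
    obtain ⟨c, hlc, hcb⟩ := exists_between hl.2
    exact ⟨c, ⟨hl.1.trans hlc.le, hcb⟩, fun t ht => hlw ⟨hlc.trans_le ht.1, ht.2⟩⟩
  obtain ⟨t, ht, hmax⟩ := isCompact_Icc.exists_isMaxOn (nonempty_Icc.2 hc.2.le)
    (hg.mono (Icc_subset_Icc_left hc.1))
  have htab : t ∈ Icc a b := ⟨hc.1.trans ht.1, ht.2⟩
  have hgt : 0 < g t := (hpos c hc).trans_le (hmax (left_mem_Icc.2 hc.2.le))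
  have hwt : IntervalIntegrable w volume t b :=
    hw.mono_set (by
      rw [uIcc_of_le htab.2, uIcc_of_le hab.le]
      exact Icc_subset_Icc_left htab.1)
  have : g t < g t := calc
    g t ≤ ∫ u in t..b, w u * g u := hle t htab
    _ ≤ ∫ u in t..b, w u * g t := by
      refine intervalIntegral.integral_mono_on_of_le_Ioo htab.2 ?_ (hwt.mul_const _) fun u hu => ?_
      · refine hwt.mul_continuousOn (hg.mono ?_)
        rw [uIcc_of_le htab.2]
        exact Icc_subset_Icc_left htab.1
      · exact mul_le_mul_of_nonneg_left (hmax ⟨ht.1.trans hu.1.le, hu.2.le⟩)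
          (hw_nonneg u ⟨htab.1.trans_lt hu.1, hu.2⟩)
    _ = (∫ u in t..b, w u) * g t := intervalIntegral.integral_mul_const _ _
    _ < g t := mul_lt_of_lt_one_left hgt (hcw t ht)
  exact this.false

theorem exists_first_nonpos {f : ℝ → ℝ} {a T : ℝ} (hf : ContinuousOn f (Ici a)) (ha : 0 < f a)
    (haT : a ≤ T) (hT : f T ≤ 0) : ∃ b > a, f b ≤ 0 ∧ ∀ t ∈ Ico a b, 0 < f t := by
  have hclosed : IsClosed (Ici a ∩ f ⁻¹' Iic 0) :=
    hf.preimage_isClosed_of_isClosed isClosed_Ici isClosed_Iic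
  obtain ⟨b, hb⟩ : ∃ b, IsLeast (Ici a ∩ f ⁻¹' Iic 0) b :=
    ⟨_, hclosed.isLeast_csInf ⟨T, haT, hT⟩ ⟨a, fun t ht => ht.1⟩⟩
  refine ⟨b, lt_of_le_of_ne hb.1.1 ?_, hb.1.2, fun t ht => ?_⟩
  · rintro rfl
    exact ha.not_ge hb.1.2
  · by_contra! h
    exact ht.2.not_ge (hb.2 ⟨ht.1, h⟩)

theorem pos_of_volterra_antitone_kernel {K : ℝ → ℝ → ℝ} {f : ℝ → ℝ} {c : ℝ} (hc : 0 < c)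
    (hK_nonneg : ∀ t u, 0 < u → u < t → 0 ≤ K t u)
    (hK_anti : ∀ u, 0 < u → AntitoneOn (fun t => K t u) (Ioi u))
    (hK_int : ∀ t, 0 ≤ t → IntervalIntegrable (K t) volume 0 t)
    (hf : ContinuousOn f (Ici 0))
    (hfK : ∀ t, 0 ≤ t → f t = c - ∫ u in (0 : ℝ)..t, K t u * f u) {T : ℝ} (hT : 0 ≤ T) :
    0 < f T := by
  by_contra! hfT
  obtain ⟨b, hb, hfb, hpos⟩ := exists_first_nonpos hf (by simpa [hfK 0 le_rfl]) hT hfT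
  have hint {r s t} (hr : 0 ≤ r) (hrs : r ≤ s) (hst : s ≤ t) :
      IntervalIntegrable (fun u => K t u * f u) volume r s := by
    have hrs' : uIcc r s ⊆ uIcc 0 t := by
      rw [uIcc_of_le hrs, uIcc_of_le (hr.trans (hrs.trans hst))]
      exact Icc_subset_Icc hr hst
    refine ((hK_int t (hr.trans (hrs.trans hst))).mono_set hrs').mul_continuousOn
      (hf.mono fun u hu => ?_)
    rw [uIcc_of_le hrs] at hu
    exact hr.trans hu.1
  have hgronwall : ∀ t ∈ Icc 0 b, f t ≤ ∫ u in t..b, K b u * f u := by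
    intro t ht
    have hmono : ∫ u in (0 : ℝ)..t, K b u * f u ≤ ∫ u in (0 : ℝ)..t, K t u * f u := by
      refine intervalIntegral.integral_mono_on_of_le_Ioo ht.1 (hint le_rfl ht.1 ht.2)
        (hint le_rfl ht.1 le_rfl) fun u hu => ?_
      have hub := hu.2.trans_le ht.2
      exact mul_le_mul_of_nonneg_right (hK_anti u hu.1 hu.2 hub ht.2) (hpos u ⟨hu.1.le, hub⟩).le
    have hsplit := intervalIntegral.integral_add_adjacent_intervals
      (hint le_rfl ht.1 ht.2) (hint ht.1 ht.2 le_rfl)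
    linarith [hfK t ht.1, hfK b hb.le]
  obtain ⟨t, ht, hft⟩ := exists_nonpos_of_le_integral_mul hb (hK_int b hb.le)
    (fun u hu => hK_nonneg b u hu.1 hu.2) (hf.mono Icc_subset_Ici_self) hgronwall
  exact (hpos t ht).not_ge hft

theorem exp_neg_mul_rpow_le_Gamma {R x : ℝ} (hR : 0 ≤ R) (hx : 1 ≤ x) :
    exp (-R) * R ^ (x - 1) ≤ Gamma x := by
  have hΓ := GammaIntegral_convergent (zero_lt_one.trans_le hx)
  calc exp (-R) * R ^ (x - 1)
      = ∫ u in Ioi R, exp (-u) * R ^ (x - 1) := by rw [integral_mul_const, integral_exp_neg_Ioi]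
    _ ≤ ∫ u in Ioi R, exp (-u) * u ^ (x - 1) :=
        setIntegral_mono_on ((integrableOn_exp_neg_Ioi R).mul_const _)
          (hΓ.mono_set (Ioi_subset_Ioi hR)) measurableSet_Ioi fun u hu =>
          mul_le_mul_of_nonneg_left (rpow_le_rpow hR (mem_Ioi.1 hu).le (sub_nonneg.2 hx))
            (exp_pos _).le
    _ ≤ ∫ u in Ioi 0, exp (-u) * u ^ (x - 1) :=
        setIntegral_mono_set hΓ (ae_restrict_of_forall_mem measurableSet_Ioi fun u hu =>
          mul_nonneg (exp_pos _).le (rpow_nonneg (mem_Ioi.1 hu).le _))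
          (Ioi_subset_Ioi hR).eventuallyLE
    _ = Gamma x := (Gamma_eq_integral (zero_lt_one.trans_le hx)).symm

theorem integral_rpow_mul_one_sub_rpow {a b : ℝ} (ha : 0 < a) (hb : 0 < b) :
    ∫ s in (0 : ℝ)..1, s ^ (a - 1) * (1 - s) ^ (b - 1) = ProbabilityTheory.beta a b := by
  have hcast : Complex.betaIntegral a b =
      ((∫ s in (0 : ℝ)..1, s ^ (a - 1) * (1 - s) ^ (b - 1) : ℝ) : ℂ) := by
    rw [← intervalIntegral.integral_ofReal]
    refine intervalIntegral.integral_congr fun s hs => ?_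
    rw [uIcc_of_le zero_le_one] at hs
    simp [Complex.ofReal_cpow hs.1, Complex.ofReal_cpow (sub_nonneg.2 hs.2)]
  rw [ProbabilityTheory.beta_eq_betaIntegralReal a b ha hb, hcast, Complex.ofReal_re]

theorem intervalIntegrable_rpow_mul_one_sub_rpow {a b : ℝ} (ha : 0 < a) (hb : 0 < b) :
    IntervalIntegrable (fun s : ℝ => s ^ (a - 1) * (1 - s) ^ (b - 1)) volume 0 1 := by
  refine intervalIntegral.intervalIntegrable_of_integral_ne_zero ?_
  rw [integral_rpow_mul_one_sub_rpow ha hb]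
  exact (ProbabilityTheory.beta_pos ha hb).ne'

theorem Gamma_mul_natCast_add_pos {α : ℝ} (hα : 0 < α) (m : ℕ) : 0 < Gamma (α * m + α) :=
  Gamma_pos_of_pos (by positivity)

theorem summable_mittagLeffler {α : ℝ} (hα : 0 < α) (z : ℝ) :
    Summable fun m : ℕ => z ^ m / Gamma (α * m + α) := by
  -- The Gamma bound at this `R` makes the `m`-th term `O((|z| / (|z| + 1)) ^ m)`.
  set q : ℝ := |z| + 1
  set R : ℝ := q ^ α⁻¹
  have hR : 0 < R := by positivity
  have hRα : R ^ α = q := rpow_inv_rpow (by positivity) hα.ne'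
  have hgeom : Summable fun m : ℕ => exp R * R ^ (1 - α) * (|z| / q) ^ m :=
    (summable_geometric_of_lt_one (by positivity)
      ((div_lt_one (by positivity)).2 (lt_add_one _))).mul_left _
  have hlarge : ∀ᶠ m : ℕ in Filter.atTop, 1 ≤ α * m + α :=
    (Filter.tendsto_atTop_add_const_right _ α
      (tendsto_natCast_atTop_atTop.const_mul_atTop hα)).eventually_ge_atTop 1
  refine hgeom.of_norm_bounded_eventually_nat (hlarge.mono fun m hm => ?_)
  have hpow : R ^ (α * m + α - 1) = q ^ m * (R ^ (1 - α))⁻¹ := by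
    rw [← rpow_neg hR.le, ← hRα, ← rpow_mul_natCast hR.le, ← rpow_add hR]
    ring_nf
  calc ‖z ^ m / Gamma (α * m + α)‖
      = |z| ^ m / Gamma (α * m + α) := by
        rw [norm_div, norm_pow, norm_eq_abs, norm_of_nonneg (Gamma_mul_natCast_add_pos hα m).le]
    _ ≤ |z| ^ m / (exp (-R) * R ^ (α * m + α - 1)) := by
        gcongr
        exact exp_neg_mul_rpow_le_Gamma hR.le hm
    _ = exp R * R ^ (1 - α) * (|z| / q) ^ m := by
        rw [hpow, exp_neg, div_pow]
        field_simp

theorem hasSum_mittagLeffler {α : ℝ} (hα : 0 < α) (z : ℝ) :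
    HasSum (fun m : ℕ => z ^ m / Gamma (α * m + α)) (mittagLeffler α z) :=
  (summable_mittagLeffler hα z).hasSum

theorem continuous_mittagLeffler {α : ℝ} (hα : 0 < α) : Continuous (mittagLeffler α) := by
  refine continuous_iff_continuousAt.2 fun z => ?_
  have hball : ContinuousOn (mittagLeffler α) (Metric.ball 0 (|z| + 1)) := by
    refine continuousOn_tsum (fun m => by fun_prop) (summable_mittagLeffler hα (|z| + 1))
      fun m y hy => ?_
    have hΓ := Gamma_mul_natCast_add_pos hα m
    have hy' : |y| ≤ |z| + 1 := (mem_ball_zero_iff.1 hy).le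
    rw [norm_div, norm_pow, norm_eq_abs, norm_of_nonneg hΓ.le]
    gcongr
  exact hball.continuousAt (Metric.isOpen_ball.mem_nhds (by simp))

theorem mittagLeffler_zero (α : ℝ) : mittagLeffler α 0 = 1 / Gamma α := by
  rw [mittagLeffler, tsum_eq_single 0 fun m hm => by simp [hm]]
  simp

theorem mittagLeffler_pos_of_nonneg {α z : ℝ} (hα : 0 < α) (hz : 0 ≤ z) :
    0 < mittagLeffler α z :=
  (summable_mittagLeffler hα z).tsum_pos
    (fun m => div_nonneg (pow_nonneg hz m) (Gamma_mul_natCast_add_pos hα m).le) 0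
    (by simpa using Gamma_pos_of_pos hα)

theorem integral_mittagLeffler_term {α : ℝ} (hα : 0 < α) (x y : ℝ) (m n : ℕ) :
    ∫ s in (0 : ℝ)..1, s ^ (α - 1) * (1 - s) ^ (α - 1) *
        ((x * s ^ α) ^ m / Gamma (α * m + α) * ((y * (1 - s) ^ α) ^ n / Gamma (α * n + α))) =
      x ^ m * y ^ n / Gamma (α * (m + n + 1 : ℕ) + α) := by
  have hrpow {u : ℝ} (hu : 0 < u) (k : ℕ) :
      u ^ (α - 1) * (u ^ α) ^ k = u ^ (α * k + α - 1) := by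
    rw [← rpow_mul_natCast hu.le, ← rpow_add hu]
    ring_nf
  calc _ = ∫ s in (0 : ℝ)..1, x ^ m / Gamma (α * m + α) * (y ^ n / Gamma (α * n + α)) *
        (s ^ (α * m + α - 1) * (1 - s) ^ (α * n + α - 1)) := by
        refine intervalIntegral.integral_congr_Ioo_of_le zero_le_one fun s hs => ?_
        simp only [← hrpow hs.1, ← hrpow (sub_pos.2 hs.2), mul_pow]
        ring
    _ = x ^ m / Gamma (α * m + α) * (y ^ n / Gamma (α * n + α)) *
        ProbabilityTheory.beta (α * m + α) (α * n + α) := by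
        rw [intervalIntegral.integral_const_mul,
          integral_rpow_mul_one_sub_rpow (by positivity) (by positivity)]
    _ = x ^ m * y ^ n / Gamma (α * (m + n + 1 : ℕ) + α) := by
        have hm := (Gamma_mul_natCast_add_pos hα m).ne'
        have hn := (Gamma_mul_natCast_add_pos hα n).ne'
        rw [ProbabilityTheory.beta,
          show α * (m + n + 1 : ℕ) + α = α * m + α + (α * n + α) by push_cast; ring]
        field_simp [hm, hn]

theorem sub_mul_sum_antidiagonal {R : Type*} [CommRing R] (x y : R) (N : ℕ) :
    (x - y) * ∑ p ∈ antidiagonal N, x ^ p.1 * y ^ p.2 = x ^ (N + 1) - y ^ (N + 1) := by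
  rw [Finset.Nat.sum_antidiagonal_eq_sum_range_succ fun i j => x ^ i * y ^ j, mul_comm]
  exact geom_sum₂_mul x y (N + 1)

theorem norm_mittagLeffler_term_le {α : ℝ} (hα : 0 < α) (x : ℝ) {r : ℝ} (hr : r ∈ Icc (0 : ℝ) 1)
    (m : ℕ) : ‖(x * r ^ α) ^ m / Gamma (α * m + α)‖ ≤ |x| ^ m / Gamma (α * m + α) := by
  have hΓ := Gamma_mul_natCast_add_pos hα m
  have hxr : |x * r ^ α| ≤ |x| := by
    rw [abs_mul, abs_of_nonneg (rpow_nonneg hr.1 α)]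
    exact mul_le_of_le_one_right (abs_nonneg x) (rpow_le_one hr.1 hr.2 hα.le)
  rw [norm_div, norm_pow, norm_eq_abs, norm_of_nonneg hΓ.le]
  gcongr

theorem hasSum_mittagLeffler_mul_mittagLeffler {α : ℝ} (hα : 0 < α) (x y : ℝ) :
    HasSum (fun N : ℕ => ∑ p ∈ antidiagonal N,
        x ^ p.1 / Gamma (α * p.1 + α) * (y ^ p.2 / Gamma (α * p.2 + α)))
      (mittagLeffler α x * mittagLeffler α y) := by
  have hx := summable_mittagLeffler hα x
  have hy := summable_mittagLeffler hα y
  rw [mittagLeffler, mittagLeffler,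
    tsum_mul_tsum_eq_tsum_sum_antidiagonal_of_summable_norm hx.norm hy.norm]
  exact (summable_norm_sum_mul_antidiagonal_of_summable_norm hx.norm hy.norm).of_norm.hasSum

theorem hasSum_integral_mul_of_summable_norm {w f : ℝ → ℝ} {F : ℕ → ℝ → ℝ} {B : ℕ → ℝ} {a b : ℝ}
    (hw : IntervalIntegrable w volume a b) (hF : ∀ n, ContinuousOn (F n) (uIcc a b))
    (hB : Summable B) (hFB : ∀ n, ∀ s ∈ uIoc a b, ‖F n s‖ ≤ B n)
    (hf : ∀ s ∈ uIoc a b, HasSum (fun n => F n s) (f s)) :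
    HasSum (fun n => ∫ s in a..b, w s * F n s) (∫ s in a..b, w s * f s) := by
  refine intervalIntegral.hasSum_integral_of_dominated_convergence (fun n s => |w s| * B n)
    (fun n => (hw.mul_continuousOn (hF n)).aestronglyMeasurable_restrict_uIoc)
    (fun n => .of_forall fun s hs => ?_) (.of_forall fun s _ => hB.mul_left _) ?_
    (.of_forall fun s hs => (hf s hs).mul_left _)
  · rw [norm_mul, norm_eq_abs]
    exact mul_le_mul_of_nonneg_left (hFB n s hs) (abs_nonneg _)
  · simp_rw [tsum_mul_left]
    exact hw.abs.mul_const _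

theorem hasSum_integral_mittagLeffler_mul {α : ℝ} (hα : 0 < α) (x y : ℝ) :
    HasSum (fun N : ℕ => (∑ p ∈ antidiagonal N, x ^ p.1 * y ^ p.2) / Gamma (α * (N + 1 : ℕ) + α))
      (∫ s in (0 : ℝ)..1, s ^ (α - 1) * (1 - s) ^ (α - 1) *
        (mittagLeffler α (x * s ^ α) * mittagLeffler α (y * (1 - s) ^ α))) := by
  have hw := intervalIntegrable_rpow_mul_one_sub_rpow hα hα
  have hterm_cont (p : ℕ × ℕ) : Continuous fun s : ℝ => (x * s ^ α) ^ p.1 / Gamma (α * p.1 + α) *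
      ((y * (1 - s) ^ α) ^ p.2 / Gamma (α * p.2 + α)) := by
    fun_prop (disch := exact hα.le)
  refine (hasSum_integral_mul_of_summable_norm hw
    (fun N => (continuous_finsetSum _ fun p _ => hterm_cont p).continuousOn)
    (hasSum_mittagLeffler_mul_mittagLeffler hα |x| |y|).summable (fun N s hs => ?_)
    fun s _ => hasSum_mittagLeffler_mul_mittagLeffler hα (x * s ^ α) (y * (1 - s) ^ α)).congr_fun
    fun N => ?_
  · rw [uIoc_of_le zero_le_one] at hs
    refine (norm_sum_le _ _).trans (Finset.sum_le_sum fun p _ => ?_)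
    have hx := norm_mittagLeffler_term_le hα x ⟨hs.1.le, hs.2⟩ p.1
    rw [norm_mul]
    exact mul_le_mul hx
      (norm_mittagLeffler_term_le hα y ⟨sub_nonneg.2 hs.2, sub_le_self 1 hs.1.le⟩ p.2)
      (norm_nonneg _) ((norm_nonneg _).trans hx)
  · simp_rw [Finset.mul_sum]
    rw [intervalIntegral.integral_finsetSum fun p _ =>
      hw.mul_continuousOn (hterm_cont p).continuousOn, Finset.sum_div]
    refine Finset.sum_congr rfl fun p hp => ?_
    rw [integral_mittagLeffler_term hα, mem_antidiagonal.1 hp]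

theorem mittagLeffler_sub_mittagLeffler_eq_integral {α : ℝ} (hα : 0 < α) (x y : ℝ) :
    mittagLeffler α x - mittagLeffler α y =
      (x - y) * ∫ s in (0 : ℝ)..1, s ^ (α - 1) * (1 - s) ^ (α - 1) *
        (mittagLeffler α (x * s ^ α) * mittagLeffler α (y * (1 - s) ^ α)) := by
  have htail (z : ℝ) : HasSum (fun N : ℕ => z ^ (N + 1) / Gamma (α * (N + 1 : ℕ) + α))
      (mittagLeffler α z - 1 / Gamma α) := by
    simpa using (hasSum_nat_add_iff' 1).2 (hasSum_mittagLeffler hα z)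
  have hdiff := (htail x).sub (htail y)
  have hint := (hasSum_integral_mittagLeffler_mul hα x y).mul_left (x - y)
  rw [sub_sub_sub_cancel_right] at hdiff
  refine hdiff.unique (hint.congr_fun fun N => ?_)
  rw [← sub_div, ← sub_mul_sum_antidiagonal, mul_div_assoc]

theorem mittagLeffler_mul_rpow_eq_integral {α : ℝ} (hα : 0 < α) (x : ℝ) {t : ℝ} (ht : 0 ≤ t) :
    mittagLeffler α (x * t ^ α) = 1 / Gamma α + x / Gamma α *
      ∫ u in (0 : ℝ)..t, u ^ (α - 1) * (1 - u / t) ^ (α - 1) * mittagLeffler α (x * u ^ α) := by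
  rcases ht.eq_or_lt with rfl | ht
  · simp [zero_rpow hα.ne', mittagLeffler_zero]
  have hscale : ∫ u in (0 : ℝ)..t,
      u ^ (α - 1) * (1 - u / t) ^ (α - 1) * mittagLeffler α (x * u ^ α) =
      t ^ α * ∫ s in (0 : ℝ)..1,
        s ^ (α - 1) * (1 - s) ^ (α - 1) * mittagLeffler α (x * t ^ α * s ^ α) := by
    have hsubst := intervalIntegral.smul_integral_comp_mul_left (a := 0) (b := 1)
      (fun u => u ^ (α - 1) * (1 - u / t) ^ (α - 1) * mittagLeffler α (x * u ^ α)) t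
    rw [mul_zero, mul_one] at hsubst
    rw [← hsubst, smul_eq_mul, ← intervalIntegral.integral_const_mul,
      ← intervalIntegral.integral_const_mul]
    refine intervalIntegral.integral_congr fun s hs => ?_
    rw [uIcc_of_le zero_le_one] at hs
    have htα : t ^ α = t * t ^ (α - 1) := by rw [← rpow_one_add' ht.le] <;> simp [hα.ne']
    simp only [mul_rpow ht.le hs.1, mul_div_cancel_left₀ s ht.ne', mul_assoc x, htα]
    ring
  have h := mittagLeffler_sub_mittagLeffler_eq_integral hα (x * t ^ α) 0
  simp only [zero_mul, mittagLeffler_zero, ← mul_assoc, intervalIntegral.integral_mul_const,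
    sub_zero] at h
  rw [hscale]
  linear_combination h

theorem intervalIntegrable_rpow_mul_one_sub_div_rpow {a b t : ℝ} (ha : 0 < a) (hb : 0 < b)
    (ht : 0 ≤ t) :
    IntervalIntegrable (fun u : ℝ => u ^ (a - 1) * (1 - u / t) ^ (b - 1)) volume 0 t := by
  rcases ht.eq_or_lt with rfl | ht
  · exact IntervalIntegrable.refl
  have hscale : IntervalIntegrable (fun u : ℝ => t ^ (a - 1) *
      ((t⁻¹ * u) ^ (a - 1) * (1 - t⁻¹ * u) ^ (b - 1))) volume 0 t := by
    simpa using
      ((intervalIntegrable_rpow_mul_one_sub_rpow ha hb).comp_mul_left (c := t⁻¹)).const_mul _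
  refine hscale.congr_uIoo fun u hu => ?_
  rw [uIoo_of_le ht.le] at hu
  have hut : u ^ (a - 1) = t ^ (a - 1) * (t⁻¹ * u) ^ (a - 1) := by
    rw [← mul_rpow ht.le (by have := hu.1; positivity), mul_inv_cancel_left₀ ht.ne']
  simp only [hut, div_eq_inv_mul, mul_assoc]

theorem antitoneOn_one_sub_div_rpow {p u : ℝ} (hp : p ≤ 0) (hu : 0 ≤ u) :
    AntitoneOn (fun t : ℝ => (1 - u / t) ^ p) (Ioi u) := by
  intro s hs t _ hst
  have hs_pos : 0 < s := hu.trans_lt hs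
  exact rpow_le_rpow_of_nonpos (sub_pos.2 ((div_lt_one hs_pos).2 hs))
    (sub_le_sub_left (div_le_div_of_nonneg_left hu hs_pos hst) 1) hp

theorem mittagLeffler_pos {α : ℝ} (hα : 0 < α) (hα1 : α ≤ 1) (z : ℝ) : 0 < mittagLeffler α z := by
  rcases le_or_gt 0 z with hz | hz
  · exact mittagLeffler_pos_of_nonneg hα hz
  have hc : 0 ≤ -z / Gamma α := div_nonneg (neg_pos.2 hz).le (Gamma_pos_of_pos hα).le
  have hf : Continuous fun t : ℝ => mittagLeffler α (z * t ^ α) :=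
    (continuous_mittagLeffler hα).comp (continuous_const.mul (continuous_rpow_const hα.le))
  have hpos := pos_of_volterra_antitone_kernel (T := 1)
    (K := fun t u => -z / Gamma α * (u ^ (α - 1) * (1 - u / t) ^ (α - 1)))
    (one_div_pos.2 (Gamma_pos_of_pos hα))
    (fun t u hu hut => mul_nonneg hc (mul_nonneg (rpow_nonneg hu.le _)
      (rpow_nonneg (sub_nonneg.2 ((div_le_one (hu.trans hut)).2 hut.le)) _)))
    (fun u hu s hs t ht hst => mul_le_mul_of_nonneg_left (mul_le_mul_of_nonneg_left
      (antitoneOn_one_sub_div_rpow (sub_nonpos.2 hα1) hu.le hs ht hst) (rpow_nonneg hu.le _)) hc)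
    (fun t ht => (intervalIntegrable_rpow_mul_one_sub_div_rpow hα hα ht).const_mul _)
    hf.continuousOn (fun t ht => ?_) zero_le_one
  · simpa using hpos
  · simp only [mul_assoc (-z / Gamma α), intervalIntegral.integral_const_mul]
    rw [mittagLeffler_mul_rpow_eq_integral hα z ht]
    ring

theorem mittagLeffler_neg_antitone_general {α : ℝ} (hα0 : 0 < α) (hα1 : α ≤ 1) :
    StrictAnti fun s : ℝ => mittagLeffler α (-s) := by
  intro s t hst
  have hE := continuous_mittagLeffler hα0
  have hpow : Continuous fun u : ℝ => u ^ α := continuous_rpow_const hα0.le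
  have hint : 0 < ∫ u in (0 : ℝ)..1, u ^ (α - 1) * (1 - u) ^ (α - 1) *
      (mittagLeffler α (-s * u ^ α) * mittagLeffler α (-t * (1 - u) ^ α)) := by
    refine intervalIntegral.intervalIntegral_pos_of_pos_on
      ((intervalIntegrable_rpow_mul_one_sub_rpow hα0 hα0).mul_continuousOn
        (Continuous.continuousOn (by fun_prop))) (fun u hu => ?_) zero_lt_one
    exact mul_pos (mul_pos (rpow_pos_of_pos hu.1 _) (rpow_pos_of_pos (sub_pos.2 hu.2) _))
      (mul_pos (mittagLeffler_pos hα0 hα1 _) (mittagLeffler_pos hα0 hα1 _))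
  rw [← sub_pos, mittagLeffler_sub_mittagLeffler_eq_integral hα0]
  exact mul_pos (sub_pos.2 (neg_lt_neg hst)) hint

theorem mittagLeffler_neg_antitone (α : ℝ) (hα0 : 0 < α) (hα1 : α < 1) :
    AntitoneOn (fun s : ℝ => mittagLeffler α (-s)) (Set.Ici (0 : ℝ)) ∧
      ∀ s : ℝ, 0 ≤ s → mittagLeffler α (-s) ≤ 1 / Real.Gamma α := by
  have hanti := (mittagLeffler_neg_antitone_general hα0 hα1.le).antitone
  exact ⟨hanti.antitoneOn _, fun s hs => by simpa [mittagLeffler_zero] using hanti hs⟩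
end
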